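/- Let n ≥ 1, let a := (2+√n)/(2+2√n), b := 1−a and c(n) := (√n+1)²+1. Then for every real x and every real t ≥ 0, 2·(2 − 2x + a·x² + (b/n)·t²) ≥ (1/c(n))·(t+2)². -/

import Mathlib

/-!
Write `s = √n`, so that `1 / a = (2 + 2s) / (2 + s)` and `b / n = 1 / (2s(1 + s))`. By AM-GM,
`2x ≤ a x² + 1 / a`, so the right-hand side is at least `2²/(2 + s) + t²/(s(1 + s))`. By
Sedrakyan's lemma this is at least `(t + 2)²` divided by the sum of the two denominators, and that
sum is `c(n) = (s + 1)² + 1`.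
-/

theorem add_sq_div_add_le {K : Type*} [Semifield K] [LinearOrder K] [IsStrictOrderedRing K]
    [ExistsAddOfLE K] {p q : K} (hp : 0 < p) (hq : 0 < q) (u v : K) :
    (u + v) ^ 2 / (p + q) ≤ u ^ 2 / p + v ^ 2 / q := by
  have hpos : ∀ i ∈ Finset.univ, 0 < ![p, q] i := by simp [Fin.forall_fin_two, hp, hq]
  simpa [Fin.sum_univ_two] using Finset.sq_sum_div_le_sum_sq_div Finset.univ ![u, v] hpos

theorem stmt_3_general {K : Type*} [Field K] [LinearOrder K] [IsStrictOrderedRing K]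
    {s : K} (hs : 0 < s) (x t : K) :
    (1 / ((s + 1) ^ 2 + 1)) * (t + 2) ^ 2 ≤
      2 * (2 - 2 * x + ((2 + s) / (2 + 2 * s)) * x ^ 2 +
        ((1 - (2 + s) / (2 + 2 * s)) / s ^ 2) * t ^ 2) := by
  set a := (2 + s) / (2 + 2 * s) with ha
  have a_pos : 0 < a := by positivity
  have two_sub_inv : 2 - a⁻¹ = 2 / (2 + s) := by
    rw [ha, inv_div]
    field_simp
    ring
  have one_sub_div_sq : (1 - a) / s ^ 2 = 1 / (2 * (s * (1 + s))) := by
    have : 2 + 2 * s ≠ 0 := by positivity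
    rw [ha]
    field_simp
    ring
  have amgm : 2 * x ≤ a * x ^ 2 + a⁻¹ := by
    simpa using two_mul_le_add_mul_sq (a := x) (b := 1) a_pos
  calc
    1 / ((s + 1) ^ 2 + 1) * (t + 2) ^ 2 = (t + 2) ^ 2 / (s * (1 + s) + (2 + s)) := by
      ring
    _ ≤ t ^ 2 / (s * (1 + s)) + 2 ^ 2 / (2 + s) :=
      add_sq_div_add_le (by positivity) (by positivity) t 2
    _ = 2 * (2 - a⁻¹ + (1 - a) / s ^ 2 * t ^ 2) := by
      rw [two_sub_inv, one_sub_div_sq]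
      field_simp
      ring
    _ ≤ 2 * (2 - 2 * x + a * x ^ 2 + (1 - a) / s ^ 2 * t ^ 2) := by
      linarith

/-- With `a = (2+√n)/(2+2√n)`, `b = 1−a` and `c(n) = (√n+1)²+1`, for every
real `x` and every `t ≥ 0`, `2·(2 − 2x + a·x² + (b/n)·t²) ≥ (1/c(n))·(t+2)²`. -/
theorem stmt_3 (n : ℕ) (hn : 1 ≤ n) (x t : ℝ) (ht : 0 ≤ t) :
    (1 / ((Real.sqrt n + 1) ^ 2 + 1)) * (t + 2) ^ 2 ≤
      2 * (2 - 2 * x + ((2 + Real.sqrt n) / (2 + 2 * Real.sqrt n)) * x ^ 2 +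
        ((1 - (2 + Real.sqrt n) / (2 + 2 * Real.sqrt n)) / (n : ℝ)) * t ^ 2) := by
  have sqrt_pos : 0 < Real.sqrt n := Real.sqrt_pos.mpr (Nat.cast_pos.mpr hn)
  simpa only [Real.sq_sqrt n.cast_nonneg] using stmt_3_general sqrt_pos x t
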